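/- arXiv:2304.14527 — 3 statements merged into one kernel-verified Lean document; each statement's English description precedes it below -/
import Mathlib

section
/- Let K ≥ 2 be an even integer, let G be a finite simple bipartite graph in which every vertex has degree exactly 2, let M be a matching in G having no augmenting paths of length ≤ 2K+1, and let v be a vertex not covered by M. Then |X_{2l}(v)| = 2l for every integer l with 1 ≤ l ≤ K/2. -/
/-- A vertex `v` is covered by a set `M` of edges if it lies on some edge of `M`. -/
def coveredBy {V : Type*} (M : Set (Sym2 V)) (v : V) : Prop := ∃ e ∈ M, v ∈ e

/-- `M` is a matching in `G`: a set of edges of `G`, no two of which share a vertex. -/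
def isMatching {V : Type*} (G : SimpleGraph V) (M : Set (Sym2 V)) : Prop :=
  M ⊆ G.edgeSet ∧ ∀ e ∈ M, ∀ f ∈ M, e ≠ f → ∀ v : V, ¬(v ∈ e ∧ v ∈ f)

/-- `p 0, p 1, …, p l` is an `M`-augmenting path of length `l` in `G`:
a path whose endpoints are not covered by `M`, whose edges alternate outside/inside `M`,
beginning and ending with edges outside `M` (so `l` is odd). -/
def isAugPath {V : Type*} (G : SimpleGraph V) (M : Set (Sym2 V)) (p : ℕ → V) (l : ℕ) : Prop :=
  Odd l ∧ (∀ i < l, G.Adj (p i) (p (i+1))) ∧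
  (∀ i ≤ l, ∀ j ≤ l, p i = p j → i = j) ∧
  ¬ coveredBy M (p 0) ∧ ¬ coveredBy M (p l) ∧
  ∀ i < l, (s(p i, p (i+1)) ∈ M ↔ Odd i)

/-- `G` is bipartite: the vertices can be split into a set `A` and its complement so that
every edge has one endpoint in `A` and the other outside `A`. -/
def isBipartite {V : Type*} (G : SimpleGraph V) : Prop :=
  ∃ A : Set V, ∀ v w : V, G.Adj v w → (v ∈ A ↔ w ∉ A)

/-- `N_G(S)`: vertices adjacent in `G` to some vertex of `S`. -/
def NG {V : Type*} (G : SimpleGraph V) (S : Set V) : Set V := {w | ∃ v ∈ S, G.Adj v w}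

/-- `N_M(S)`: vertices joined by an edge of `M` to some vertex of `S`. -/
def NM {V : Type*} (M : Set (Sym2 V)) (S : Set V) : Set V := {w | ∃ v ∈ S, s(v, w) ∈ M}

/-- `Yseq G M S` : `Y_0 = S`, `Y_{2k+1} = N_G(Y_{2k})`, `Y_{2k+2} = N_M(Y_{2k+1})`. -/
def Yseq {V : Type*} (G : SimpleGraph V) (M : Set (Sym2 V)) (S : Set V) : ℕ → Set V
  | 0 => S
  | (l+1) => if Even l then NG G (Yseq G M S l) else NM M (Yseq G M S l)

/-- `Wseq G M x` : `W_0 = {x}`, `W_{2k+1} = N_M(W_{2k})`, `W_{2k+2} = N_G(W_{2k+1})`. -/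
def Wseq {V : Type*} (G : SimpleGraph V) (M : Set (Sym2 V)) (x : V) : ℕ → Set V
  | 0 => {x}
  | (l+1) => if Even l then NM M (Wseq G M x l) else NG G (Wseq G M x l)

/-- The set of edges of the path `p 0, …, p l`. -/
def pathEdges {V : Type*} (p : ℕ → V) (l : ℕ) : Set (Sym2 V) :=
  {e | ∃ i < l, e = s(p i, p (i+1))}

/-!
Let `H` be `G` with the edges of `M` deleted. As long as no vertex of the odd layers
`X_1, …, X_{2l-1}` is uncovered, matched partners give `|X_{2k+2}| = |X_{2k+1}|`, and
`X_{2k+3} = N_G(v) ∪ N_H(X_{2k+2})`. In a 2-regular graph every covered vertex has exactly one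
`H`-neighbour, so this union is disjoint and `N_H` is a bijection from `X_{2k+2}` onto its
image; hence each even layer has two vertices more than the one before. An uncovered vertex in
the layer `X_{2k+1}` would be joined to `v` by an alternating walk, and cutting out closed
subwalks, which have even length as `G` is bipartite, leaves an augmenting path of length at
most `2k+1`.
-/

section AlternatingWalks

variable {V : Type*} {G : SimpleGraph V} {M : Set (Sym2 V)} {p : ℕ → V} {n : ℕ}

/-- `p 0, …, p n` is an alternating walk: its edges lie alternately in `G` and in `M`. As in the
layers `Yseq`, the edges in even position are not required to avoid `M`. -/
def IsAltWalk (G : SimpleGraph V) (M : Set (Sym2 V)) (p : ℕ → V) (n : ℕ) : Prop :=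
  ∀ i < n, (Even i → G.Adj (p i) (p (i + 1))) ∧ (Odd i → s(p i, p (i + 1)) ∈ M)

theorem IsAltWalk.adj (hp : IsAltWalk G M p n) (hM : M ⊆ G.edgeSet) {i : ℕ} (hi : i < n) :
    G.Adj (p i) (p (i + 1)) :=
  (Nat.even_or_odd i).elim (hp i hi).1 fun hodd ↦ hM ((hp i hi).2 hodd)

theorem exists_isAltWalk_of_mem_Yseq {S : Set V} {w : V} (hw : w ∈ Yseq G M S n) :
    ∃ p, IsAltWalk G M p n ∧ p 0 ∈ S ∧ p n = w := by
  induction n generalizing w with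
  | zero => exact ⟨fun _ ↦ w, fun i hi ↦ absurd hi i.not_lt_zero, hw, rfl⟩
  | succ n ih =>
    obtain ⟨u, hu, hlast⟩ : ∃ u ∈ Yseq G M S n,
        (Even n → G.Adj u w) ∧ (Odd n → s(u, w) ∈ M) := by
      rw [Yseq] at hw
      split_ifs at hw with hn
      · obtain ⟨u, hu, huw⟩ := hw
        exact ⟨u, hu, fun _ ↦ huw, fun hodd ↦ absurd hn (Nat.not_even_iff_odd.2 hodd)⟩
      · obtain ⟨u, hu, huw⟩ := hw
        exact ⟨u, hu, fun heven ↦ absurd heven hn, fun _ ↦ huw⟩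
    obtain ⟨p, hp, hp0, rfl⟩ := ih hu
    refine ⟨fun i ↦ if i ≤ n then p i else w, fun i hi ↦ ?_, by simpa using hp0, by simp⟩
    rcases Nat.lt_succ_iff_lt_or_eq.1 hi with hin | rfl
    · simpa [hin.le, Nat.succ_le_of_lt hin] using hp i hin
    · simpa using hlast

theorem isBipartite.even_iff_even (hG : isBipartite G)
    (hp : ∀ i < n, G.Adj (p i) (p (i + 1))) {i j : ℕ} (hi : i ≤ n) (hj : j ≤ n)
    (hij : p i = p j) : Even i ↔ Even j := by
  obtain ⟨A, hA⟩ := hG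
  have side : ∀ k ≤ n, (p k ∈ A ↔ (Even k ↔ p 0 ∈ A)) := by
    intro k hk
    induction k with
    | zero => simp
    | succ k ih =>
      have hstep := hA _ _ (hp k hk)
      have hk := ih (by omega)
      rw [Nat.even_add_one]
      tauto
  have hi := side i hi
  have hj := side j hj
  rw [hij] at hi
  tauto

theorem IsAltWalk.cut {i d : ℕ} (hp : IsAltWalk G M p (n + d)) (hd : Even d)
    (heq : p i = p (i + d)) :
    IsAltWalk G M (fun k ↦ if k < i then p k else p (k + d)) n := by
  intro k hk
  have hparity : Even (k + d) ↔ Even k := by simp [Nat.even_add, hd]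
  have hparity' : Odd (k + d) ↔ Odd k := by simp [← Nat.not_even_iff_odd, hparity]
  have hshift := hp (k + d) (by omega)
  rw [hparity, hparity', add_right_comm] at hshift
  rcases lt_trichotomy (k + 1) i with hki | rfl | hki
  · simpa [hki, (Nat.lt_succ_self k).trans hki] using hp k (by omega)
  · simpa [← heq] using hp k (by omega)
  · simpa [show ¬k < i by omega, show ¬k + 1 < i by omega] using hshift

theorem IsAltWalk.exists_injOn (hG : isBipartite G) (hM : M ⊆ G.edgeSet)
    (hp : IsAltWalk G M p n) :
    ∃ q m, IsAltWalk G M q m ∧ Set.InjOn q (Set.Iic m) ∧ m ≤ n ∧ (Even m ↔ Even n) ∧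
      q 0 = p 0 ∧ q m = p n := by
  induction n using Nat.strong_induction_on generalizing p with
  | _ n ih =>
  by_cases hinj : Set.InjOn p (Set.Iic n)
  · exact ⟨p, n, hp, hinj, le_rfl, Iff.rfl, rfl, rfl⟩
  obtain ⟨i, j, hj, heq, hij⟩ : ∃ i j, j ≤ n ∧ p i = p j ∧ i < j := by
    simp only [Set.InjOn, Set.mem_Iic, not_forall] at hinj
    obtain ⟨i, hi, j, hj, heq, hne⟩ := hinj
    rcases lt_or_gt_of_ne hne with h | h
    exacts [⟨i, j, hj, heq, h⟩, ⟨j, i, hi, heq.symm, h⟩]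
  obtain ⟨d, rfl⟩ := Nat.exists_eq_add_of_le hij.le
  obtain ⟨m, rfl⟩ := Nat.exists_eq_add_of_le' (show d ≤ n by omega)
  have hd : Even d := by
    have := hG.even_iff_even (fun _ ↦ hp.adj hM) (by omega) hj heq
    grind
  obtain ⟨q, k, hq, hqinj, hk, hparity, hq0, hqk⟩ :=
    ih m (by omega) (hp.cut hd heq)
  refine ⟨q, k, hq, hqinj, by omega, by simp [hparity, Nat.even_add, hd], ?_, ?_⟩
  · rw [hq0]
    rcases Nat.eq_zero_or_pos i with rfl | hi
    · simpa using heq.symm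
    · simp [hi]
  · simp [hqk, show ¬m < i by omega]

end AlternatingWalks

section Matchings

variable {V : Type*} {G : SimpleGraph V} {M : Set (Sym2 V)}

theorem coveredBy_iff {v : V} : coveredBy M v ↔ ∃ w, s(v, w) ∈ M := by
  constructor
  · rintro ⟨_, he, w, rfl⟩
    exact ⟨w, he⟩
  · rintro ⟨w, hw⟩
    exact ⟨_, hw, Sym2.mem_mk_left v w⟩

theorem isMatching.eq_of_mem (hM : isMatching G M) {x y z : V} (hy : s(x, y) ∈ M)
    (hz : s(x, z) ∈ M) : y = z := by
  by_contra hne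
  exact hM.2 _ hy _ hz (mt Sym2.congr_right.1 hne) x
    ⟨Sym2.mem_mk_left x y, Sym2.mem_mk_left x z⟩

theorem IsAltWalk.isAugPath {p : ℕ → V} {n : ℕ} (hp : IsAltWalk G M p n) (hM : isMatching G M)
    (hinj : Set.InjOn p (Set.Iic n)) (hn : Odd n) (h0 : ¬coveredBy M (p 0))
    (hlast : ¬coveredBy M (p n)) : isAugPath G M p n := by
  refine ⟨hn, fun i ↦ hp.adj hM.1, fun i hi j hj ↦ hinj hi hj, h0, hlast, fun i hi ↦
    ⟨fun hmem ↦ ?_, (hp i hi).2⟩⟩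
  by_contra heven
  cases i with
  | zero => exact h0 (coveredBy_iff.2 ⟨_, hmem⟩)
  | succ i =>
    have hprev : s(p (i + 1), p i) ∈ M := by
      rw [Sym2.eq_swap]
      exact (hp i (by omega)).2 (by grind)
    have : i = i + 2 :=
      hinj (Set.mem_Iic.2 (by omega)) (Set.mem_Iic.2 hi) (hM.eq_of_mem hprev hmem)
    omega

theorem exists_isAugPath_of_mem_Yseq (hG : isBipartite G) (hM : isMatching G M) {v w : V} {n : ℕ}
    (hn : Odd n) (hv : ¬coveredBy M v) (hw : ¬coveredBy M w) (hmem : w ∈ Yseq G M {v} n) :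
    ∃ p m, m ≤ n ∧ p 0 = v ∧ isAugPath G M p m := by
  obtain ⟨p, hp, hpv, rfl⟩ := exists_isAltWalk_of_mem_Yseq hmem
  obtain rfl : p 0 = v := hpv
  obtain ⟨q, m, hq, hqinj, hmn, hparity, hq0, hqm⟩ := hp.exists_injOn hG hM.1
  have hm : Odd m := by rwa [← Nat.not_even_iff_odd, hparity, Nat.not_even_iff_odd]
  exact ⟨q, m, hmn, hq0, hq.isAugPath hM hqinj hm (by rwa [hq0]) (by rwa [hqm])⟩

theorem coveredBy_of_mem_NM {S : Set V} {w : V} (hw : w ∈ NM M S) : coveredBy M w := by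
  obtain ⟨u, -, huw⟩ := hw
  exact coveredBy_iff.2 ⟨u, Sym2.eq_swap ▸ huw⟩

theorem isMatching.NM_NM (hM : isMatching G M) {S : Set V} (hS : ∀ s ∈ S, coveredBy M s) :
    NM M (NM M S) = S := by
  ext x
  constructor
  · rintro ⟨y, ⟨z, hz, hzy⟩, hyx⟩
    rw [Sym2.eq_swap] at hzy
    rwa [hM.eq_of_mem hyx hzy]
  · intro hx
    obtain ⟨y, hxy⟩ := coveredBy_iff.1 (hS x hx)
    exact ⟨y, ⟨x, hx, hxy⟩, Sym2.eq_swap ▸ hxy⟩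

theorem isMatching.ncard_NM (hM : isMatching G M) {S : Set V} (hS : ∀ s ∈ S, coveredBy M s) :
    (NM M S).ncard = S.ncard := by
  choose! mate hmate using fun s hs ↦ coveredBy_iff.1 (hS s hs)
  have himage : NM M S = mate '' S := by
    ext w
    constructor
    · rintro ⟨s, hs, hsw⟩
      exact ⟨s, hs, hM.eq_of_mem (hmate s hs) hsw⟩
    · rintro ⟨s, hs, rfl⟩
      exact ⟨s, hs, hmate s hs⟩
  have hinj : Set.InjOn mate S := by
    intro s hs t ht hst
    have hs' := hmate s hs
    have ht' := hmate t ht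
    rw [Sym2.eq_swap] at hs' ht'
    exact hM.eq_of_mem hs' (hst ▸ ht')
  rw [himage, hinj.ncard_image]

theorem isMatching.ncard_neighborSet_deleteEdges (hM : isMatching G M) {v : V}
    (hv : coveredBy M v) :
    ((G.deleteEdges M).neighborSet v).ncard = (G.neighborSet v).ncard - 1 := by
  obtain ⟨w, hw⟩ := coveredBy_iff.1 hv
  have hdiff : (G.deleteEdges M).neighborSet v = G.neighborSet v \ {w} := by
    ext x
    simp only [SimpleGraph.mem_neighborSet, SimpleGraph.deleteEdges_adj, Set.mem_sdiff,
      Set.mem_singleton_iff]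
    refine and_congr_right fun _ ↦ not_congr ⟨fun hx ↦ hM.eq_of_mem hx hw, ?_⟩
    rintro rfl
    exact hw
  rw [hdiff, Set.ncard_sdiff_singleton_of_mem (show w ∈ G.neighborSet v from hM.1 hw)]

theorem neighborSet_deleteEdges_of_not_coveredBy {v : V} (hv : ¬coveredBy M v) :
    (G.deleteEdges M).neighborSet v = G.neighborSet v := by
  ext x
  simp only [SimpleGraph.mem_neighborSet, SimpleGraph.deleteEdges_adj, and_iff_left_iff_imp]
  exact fun _ hx ↦ hv (coveredBy_iff.2 ⟨x, hx⟩)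

end Matchings

section Neighborhoods

variable {V : Type*} {G : SimpleGraph V}

theorem NG_singleton (v : V) : NG G {v} = G.neighborSet v := by
  ext w
  simp [NG]

theorem NG_mono {S T : Set V} (hST : S ⊆ T) : NG G S ⊆ NG G T :=
  fun _ ⟨s, hs, hsw⟩ ↦ ⟨s, hST hs, hsw⟩

theorem NM_mono {M : Set (Sym2 V)} {S T : Set V} (hST : S ⊆ T) : NM M S ⊆ NM M T :=
  fun _ ⟨s, hs, hsw⟩ ↦ ⟨s, hST hs, hsw⟩

theorem NM_subset_NG {M : Set (Sym2 V)} (hM : M ⊆ G.edgeSet) (S : Set V) : NM M S ⊆ NG G S :=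
  fun _ ⟨s, hs, hsw⟩ ↦ ⟨s, hs, hM hsw⟩

theorem NG_eq_NM_union {M : Set (Sym2 V)} (hM : M ⊆ G.edgeSet) (S : Set V) :
    NG G S = NM M S ∪ NG (G.deleteEdges M) S := by
  refine Set.Subset.antisymm ?_ (Set.union_subset (NM_subset_NG hM S) ?_)
  · rintro w ⟨s, hs, hsw⟩
    by_cases hmem : s(s, w) ∈ M
    · exact Or.inl ⟨s, hs, hmem⟩
    · exact Or.inr ⟨s, hs, SimpleGraph.deleteEdges_adj.2 ⟨hsw, hmem⟩⟩
  · rintro w ⟨s, hs, hsw⟩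
    exact ⟨s, hs, (SimpleGraph.deleteEdges_adj.1 hsw).1⟩

theorem ncard_NG_of_ncard_neighborSet_eq_one {S : Set V}
    (hS : ∀ s ∈ S, (G.neighborSet s).ncard = 1)
    (hN : ∀ t ∈ NG G S, (G.neighborSet t).Subsingleton) : (NG G S).ncard = S.ncard := by
  choose! f hf using fun s hs ↦ Set.ncard_eq_one.1 (hS s hs)
  have hadj : ∀ s ∈ S, ∀ t, G.Adj s t ↔ t = f s := fun s hs t ↦ by
    rw [← SimpleGraph.mem_neighborSet, hf s hs, Set.mem_singleton_iff]
  have himage : NG G S = f '' S := by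
    ext t
    exact exists_congr fun s ↦ and_congr_right fun hs ↦ (hadj s hs t).trans eq_comm
  have hinj : Set.InjOn f S := fun s hs s' hs' heq ↦
    hN (f s) ⟨s, hs, (hadj s hs _).2 rfl⟩ ((hadj s hs _).2 rfl).symm
      ((hadj s' hs' _).2 heq).symm
  rw [himage, hinj.ncard_image]

theorem disjoint_neighborSet_NG {S : Set V} {v : V} (hv : v ∉ S)
    (hN : ∀ t ∈ NG G S, (G.neighborSet t).Subsingleton) :
    Disjoint (G.neighborSet v) (NG G S) := by
  rw [Set.disjoint_left]
  rintro t hvt ⟨s, hs, hst⟩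
  have : s = v := hN t ⟨s, hs, hst⟩ hst.symm hvt.symm
  exact hv (this ▸ hs)

theorem ncard_neighborSet_union_NG {S : Set V} {v : V} (hfin : S.Finite)
    (hvfin : (G.neighborSet v).Finite) (hv : v ∉ S)
    (hS : ∀ s ∈ S, (G.neighborSet s).ncard = 1)
    (hN : ∀ t ∈ NG G S, (G.neighborSet t).Subsingleton) :
    (G.neighborSet v ∪ NG G S).ncard = (G.neighborSet v).ncard + S.ncard := by
  have hcard := ncard_NG_of_ncard_neighborSet_eq_one hS hN
  have hNfin : (NG G S).Finite := by
    rcases S.eq_empty_or_nonempty with rfl | hne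
    · simp [NG]
    · exact Set.finite_of_ncard_pos (hcard ▸ (Set.ncard_pos hfin).2 hne)
  rw [Set.ncard_union_eq (disjoint_neighborSet_NG hv hN) hvfin hNfin, hcard]

end Neighborhoods

section Layers

variable {V : Type*} {G : SimpleGraph V} {M : Set (Sym2 V)} {S : Set V}

theorem Yseq_two_mul_add_one (k : ℕ) : Yseq G M S (2 * k + 1) = NG G (Yseq G M S (2 * k)) := by
  rw [Yseq, if_pos (even_two_mul k)]

theorem Yseq_two_mul_add_two (k : ℕ) :
    Yseq G M S (2 * k + 2) = NM M (Yseq G M S (2 * k + 1)) := by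
  rw [Yseq, if_neg (Nat.not_even_two_mul_add_one k)]

theorem isMatching.NM_Yseq (hM : isMatching G M) {k : ℕ}
    (hcov : ∀ w ∈ Yseq G M S (2 * k + 1), coveredBy M w) :
    NM M (Yseq G M S (2 * k + 2)) = Yseq G M S (2 * k + 1) := by
  rw [Yseq_two_mul_add_two, hM.NM_NM hcov]

theorem isMatching.Yseq_odd_subset (hM : isMatching G M) {k : ℕ}
    (hcov : ∀ w ∈ Yseq G M S (2 * k + 1), coveredBy M w) :
    Yseq G M S (2 * k + 1) ⊆ Yseq G M S (2 * k + 3) :=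
  calc Yseq G M S (2 * k + 1) = NM M (Yseq G M S (2 * k + 2)) := (hM.NM_Yseq hcov).symm
    _ ⊆ NG G (Yseq G M S (2 * k + 2)) := NM_subset_NG hM.1 _
    _ = Yseq G M S (2 * k + 3) := (Yseq_two_mul_add_one (k + 1)).symm

theorem isMatching.Yseq_even_subset (hM : isMatching G M) {k : ℕ}
    (hcov : ∀ w ∈ Yseq G M S (2 * k + 1), coveredBy M w) :
    Yseq G M S (2 * k + 2) ⊆ Yseq G M S (2 * k + 4) := by
  rw [Yseq_two_mul_add_two, show 2 * k + 4 = 2 * (k + 1) + 2 by ring, Yseq_two_mul_add_two]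
  exact NM_mono (hM.Yseq_odd_subset hcov)

theorem isMatching.Yseq_odd_eq (hM : isMatching G M) {k : ℕ}
    (hcov : ∀ j ≤ k, ∀ w ∈ Yseq G M S (2 * j + 1), coveredBy M w) :
    Yseq G M S (2 * k + 3) = NG G S ∪ NG (G.deleteEdges M) (Yseq G M S (2 * k + 2)) := by
  have hsplit : ∀ j ≤ k, Yseq G M S (2 * j + 3) =
      Yseq G M S (2 * j + 1) ∪ NG (G.deleteEdges M) (Yseq G M S (2 * j + 2)) := fun j hj ↦ by
    rw [← hM.NM_Yseq (hcov j hj), ← NG_eq_NM_union hM.1]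
    exact Yseq_two_mul_add_one (j + 1)
  induction k with
  | zero => exact hsplit 0 le_rfl
  | succ k ih =>
    have hprev := ih (fun j hj ↦ hcov j (by omega)) fun j hj ↦ hsplit j (by omega)
    have hmono : NG (G.deleteEdges M) (Yseq G M S (2 * k + 2)) ⊆
        NG (G.deleteEdges M) (Yseq G M S (2 * (k + 1) + 2)) :=
      NG_mono (hM.Yseq_even_subset (hcov k (by omega)))
    calc Yseq G M S (2 * (k + 1) + 3)
        = Yseq G M S (2 * k + 3) ∪
            NG (G.deleteEdges M) (Yseq G M S (2 * (k + 1) + 2)) := hsplit (k + 1) le_rfl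
      _ = NG G S ∪ NG (G.deleteEdges M) (Yseq G M S (2 * (k + 1) + 2)) := by
        rw [hprev, Set.union_assoc, Set.union_eq_right.2 hmono]

theorem isMatching.ncard_Yseq_succ (hM : isMatching G M)
    (hdeg : ∀ u, (G.neighborSet u).ncard = 2) {v : V} (hv : ¬coveredBy M v) {k : ℕ}
    (hcov : ∀ j ≤ k + 1, ∀ w ∈ Yseq G M {v} (2 * j + 1), coveredBy M w)
    (hfin : (Yseq G M {v} (2 * k + 2)).Finite) :
    (Yseq G M {v} (2 * k + 4)).ncard = (Yseq G M {v} (2 * k + 2)).ncard + 2 := by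
  set E := Yseq G M {v} (2 * k + 2) with hE
  set H := G.deleteEdges M
  have hHv : H.neighborSet v = G.neighborSet v := neighborSet_deleteEdges_of_not_coveredBy hv
  have hodd : Yseq G M {v} (2 * k + 3) = H.neighborSet v ∪ NG H E := by
    rw [hM.Yseq_odd_eq fun j hj ↦ hcov j (by omega), NG_singleton, hHv]
  have hEcov : ∀ s ∈ E, coveredBy M s := fun s hs ↦ by
    rw [hE, Yseq_two_mul_add_two] at hs
    exact coveredBy_of_mem_NM hs
  have hone : ∀ s, coveredBy M s → (H.neighborSet s).ncard = 1 := fun s hs ↦ by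
    rw [hM.ncard_neighborSet_deleteEdges hs, hdeg]
  have hN : ∀ t ∈ NG H E, (H.neighborSet t).Subsingleton := fun t ht ↦ by
    have htcov : coveredBy M t := hcov (k + 1) le_rfl t (hodd ▸ Or.inr ht)
    obtain ⟨s, hs⟩ := Set.ncard_eq_one.1 (hone t htcov)
    exact hs ▸ Set.subsingleton_singleton
  have hHcard : (H.neighborSet v).ncard = 2 := by rw [hHv, hdeg]
  calc (Yseq G M {v} (2 * k + 4)).ncard
      = (Yseq G M {v} (2 * k + 3)).ncard := by
        rw [show 2 * k + 4 = 2 * (k + 1) + 2 by ring, Yseq_two_mul_add_two]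
        exact hM.ncard_NM (hcov (k + 1) le_rfl)
    _ = (H.neighborSet v).ncard + E.ncard := by
        rw [hodd]
        exact ncard_neighborSet_union_NG hfin (Set.finite_of_ncard_pos (by omega))
          (mt (hEcov v) hv) (fun s hs ↦ hone s (hEcov s hs)) hN
    _ = E.ncard + 2 := by rw [hHcard, add_comm]

theorem isMatching.ncard_Yseq (hM : isMatching G M)
    (hdeg : ∀ u, (G.neighborSet u).ncard = 2) {v : V} (hv : ¬coveredBy M v) {k : ℕ}
    (hcov : ∀ j ≤ k, ∀ w ∈ Yseq G M {v} (2 * j + 1), coveredBy M w) :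
    (Yseq G M {v} (2 * k + 2)).ncard = 2 * k + 2 := by
  induction k with
  | zero =>
    calc (Yseq G M {v} 2).ncard = (NG G {v}).ncard := hM.ncard_NM (hcov 0 le_rfl)
      _ = 2 := by rw [NG_singleton, hdeg]
  | succ k ih =>
    have hprev := ih fun j hj ↦ hcov j (by omega)
    have hfin : (Yseq G M {v} (2 * k + 2)).Finite := Set.finite_of_ncard_pos (by omega)
    calc (Yseq G M {v} (2 * k + 4)).ncard
        = (Yseq G M {v} (2 * k + 2)).ncard + 2 := hM.ncard_Yseq_succ hdeg hv hcov hfin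
      _ = 2 * (k + 1) + 2 := by rw [hprev]; ring

end Layers

theorem stmt4_general {V : Type*} (G : SimpleGraph V) (M : Set (Sym2 V))
    (hbip : isBipartite G) (hdeg : ∀ v : V, (G.neighborSet v).ncard = 2) (hM : isMatching G M)
    (v : V) (hv : ¬coveredBy M v) (l : ℕ) (hl : 1 ≤ l)
    (hnoaug : ∀ (p : ℕ → V) (n : ℕ), n < 2 * l → p 0 = v → ¬isAugPath G M p n) :
    (Yseq G M {v} (2 * l)).ncard = 2 * l := by
  obtain ⟨k, rfl⟩ := Nat.exists_eq_add_of_le' hl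
  have hcov : ∀ j ≤ k, ∀ w ∈ Yseq G M {v} (2 * j + 1), coveredBy M w := by
    intro j hj w hw
    by_contra hwc
    obtain ⟨p, n, hn, hp0, hp⟩ :=
      exists_isAugPath_of_mem_Yseq hbip hM (odd_two_mul_add_one j) hv hwc hw
    exact hnoaug p n (by omega) hp0 hp
  exact hM.ncard_Yseq hdeg hv hcov

/-- In a finite 2-regular bipartite graph with matching `M` having no augmenting
paths of length ≤ 2K+1 (K ≥ 2 even) and `v` uncovered, `|X_{2l}(v)| = 2l` for
`1 ≤ l ≤ K/2`. -/
theorem stmt4 {V : Type*} [Fintype V] (G : SimpleGraph V) (M : Set (Sym2 V))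
    (K : ℕ) (hK2 : 2 ≤ K) (hKeven : Even K)
    (hbip : isBipartite G)
    (hdeg : ∀ v : V, (G.neighborSet v).ncard = 2)
    (hM : isMatching G M)
    (hnoaug : ∀ (p : ℕ → V) (l : ℕ), l ≤ 2 * K + 1 → ¬ isAugPath G M p l)
    (v : V) (hv : ¬ coveredBy M v) :
    ∀ l : ℕ, 1 ≤ l → l ≤ K / 2 → (Yseq G M {v} (2 * l)).ncard = 2 * l :=
  fun l hl hlK ↦ stmt4_general G M hbip hdeg hM v hv l hl
    fun p n hn _ ↦ hnoaug p n (by omega)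
end

section
/- Let K ≥ 2 be an even integer, let G be a finite simple bipartite graph in which every vertex has degree exactly 2, let M be a matching in G having no augmenting paths of length ≤ 2K+1, let v be a vertex not covered by M, and let x and y be the two distinct neighbors of v in G. Then the sets ⋃_{l=0}^{K−1} W_l(x) and ⋃_{l=0}^{K−1} W_l(y) are disjoint. -/
/-!
Only the sets `W_{2k}` matter: `W_{2k+1}` consists of their `M`-partners, and bipartiteness keeps
sets of different parity apart.

A vertex of `W_{2k}(x)` outside all earlier `W_{2j}(x)` is reached from `v` by an alternating chain
that visits one vertex in each of these breadth-first layers. The layers are disjoint, so the chain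
is a path; were its last vertex uncovered, it would be augmenting, of length `2k+1`. Hence all the
`W_{2k}(x)` and `W_{2k}(y)` in question consist of covered vertices.

A covered vertex `u` of degree at most two has at most one neighbour besides its `M`-partner. So
every `w` from which `u ∈ W_{2k}(x)` can be reached by an `M`-edge followed by a `G`-edge lies
itself in some `W_{2j}(x)` with `j ≤ k`. Walking back from a common vertex of `W_{2a}(x)` and
`W_{2b}(y)` to `y` shows that `y` lies in some `W_{2j}(x)`, and walking back from there to `x` gives
`x = y`.
-/

section AlternatingSearch

variable {V : Type*} {G : SimpleGraph V} {M : Set (Sym2 V)} {A B : Set V} {K : ℕ}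
  {v x y : V}

theorem coveredBy_left {a b : V} (h : s(a, b) ∈ M) : coveredBy M a :=
  ⟨_, h, Sym2.mem_mk_left a b⟩

theorem coveredBy_right {a b : V} (h : s(a, b) ∈ M) : coveredBy M b :=
  ⟨_, h, Sym2.mem_mk_right a b⟩

theorem coveredBy_iff_exists {a : V} : coveredBy M a ↔ ∃ b, s(a, b) ∈ M := by
  refine ⟨?_, fun ⟨_, h⟩ ↦ coveredBy_left h⟩
  rintro ⟨_, he, b, rfl⟩
  exact ⟨b, he⟩

theorem isMatching.adj (hM : isMatching G M) {a b : V} (h : s(a, b) ∈ M) : G.Adj a b :=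
  hM.1 h

theorem isMatching.right_unique (hM : isMatching G M) {a b c : V}
    (hb : s(a, b) ∈ M) (hc : s(a, c) ∈ M) : b = c := by
  by_contra hbc
  exact hM.2 _ hb _ hc (fun h ↦ hbc (Sym2.congr_right.1 h)) a
    ⟨Sym2.mem_mk_left a b, Sym2.mem_mk_left a c⟩

theorem isMatching.left_unique (hM : isMatching G M) {a b c : V}
    (ha : s(a, c) ∈ M) (hb : s(b, c) ∈ M) : a = b :=
  hM.right_unique (Sym2.eq_swap ▸ ha) (Sym2.eq_swap ▸ hb)

theorem exists_isBipartiteWith_mem (h : isBipartite G) (v : V) :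
    ∃ A B : Set V, G.IsBipartiteWith A B ∧ v ∈ A := by
  obtain ⟨A, hA⟩ := h
  have hAc : G.IsBipartiteWith A Aᶜ :=
    ⟨disjoint_compl_right, fun a b hab ↦ by have := hA a b hab; grind⟩
  by_cases hv : v ∈ A
  · exact ⟨A, Aᶜ, hAc, hv⟩
  · exact ⟨Aᶜ, A, hAc.symm, hv⟩

theorem eq_of_adj_of_encard_neighborSet_le_two {u n a b : V}
    (hdeg : (G.neighborSet u).encard ≤ 2) (hn : G.Adj u n) (ha : G.Adj u a) (hb : G.Adj u b)
    (han : a ≠ n) (hbn : b ≠ n) : a = b := by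
  by_contra hab
  have hthree : ({n, a, b} : Set V).encard = 3 :=
    Set.encard_eq_three.2 ⟨n, a, b, han.symm, hbn.symm, hab, rfl⟩
  have hsub : ({n, a, b} : Set V) ⊆ G.neighborSet u := by
    rintro _ (rfl | rfl | rfl) <;> assumption
  exact absurd (hthree ▸ (Set.encard_le_encard hsub).trans hdeg) (by decide)

theorem mem_Wseq_even_succ {k : ℕ} {u : V} :
    u ∈ Wseq G M x (2 * (k + 1)) ↔
      ∃ w ∈ Wseq G M x (2 * k), ∃ m, s(w, m) ∈ M ∧ G.Adj m u := by
  rw [Nat.mul_succ]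
  simp only [Wseq, NG, NM, Nat.not_even_bit1, even_two_mul, if_true, if_false, Set.mem_ofPred_eq]
  grind

theorem mem_Wseq_odd {k : ℕ} {u : V} :
    u ∈ Wseq G M x (2 * k + 1) ↔ ∃ w ∈ Wseq G M x (2 * k), s(w, u) ∈ M := by
  simp [Wseq, NM]

theorem Wseq_even_subset (hAB : G.IsBipartiteWith A B) (hM : isMatching G M) (hx : x ∈ B) (k : ℕ) :
    Wseq G M x (2 * k) ⊆ B := by
  induction k with
  | zero => simpa [Wseq] using hx
  | succ k ih =>
    intro u hu
    obtain ⟨w, hw, m, hwm, hmu⟩ := mem_Wseq_even_succ.1 hu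
    exact hAB.mem_of_mem_adj (hAB.symm.mem_of_mem_adj (ih hw) (hM.adj hwm)) hmu

theorem Wseq_odd_subset (hAB : G.IsBipartiteWith A B) (hM : isMatching G M) (hx : x ∈ B) (k : ℕ) :
    Wseq G M x (2 * k + 1) ⊆ A := by
  intro u hu
  obtain ⟨w, hw, hwu⟩ := mem_Wseq_odd.1 hu
  exact hAB.symm.mem_of_mem_adj (Wseq_even_subset hAB hM hx k hw) (hM.adj hwu)

/-- The `k`-th layer of the breadth-first search from `x` along pairs consisting of a matching edge
and an edge of `G`: the vertices that occur in `W_{2k}(x)` but in no earlier `W_{2j}(x)`. -/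
def altLayer (G : SimpleGraph V) (M : Set (Sym2 V)) (x : V) (k : ℕ) : Set V :=
  disjointed (fun j ↦ Wseq G M x (2 * j)) k

theorem mem_altLayer {k : ℕ} {u : V} :
    u ∈ altLayer G M x k ↔ u ∈ Wseq G M x (2 * k) ∧ ∀ j < k, u ∉ Wseq G M x (2 * j) := by
  simp [altLayer, disjointed_eq_inter_compl]

theorem eq_of_mem_altLayer {i j : ℕ} {u : V} (hi : u ∈ altLayer G M x i)
    (hj : u ∈ altLayer G M x j) : i = j := by
  by_contra hij
  exact Set.disjoint_left.1 (disjoint_disjointed _ hij) hi hj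

theorem exists_mem_altLayer {k : ℕ} {u : V} (hu : u ∈ Wseq G M x (2 * k)) :
    ∃ j ≤ k, u ∈ altLayer G M x j := by
  classical
  have hex : ∃ j, u ∈ Wseq G M x (2 * j) := ⟨k, hu⟩
  exact ⟨Nat.find hex, Nat.find_min' hex hu,
    mem_altLayer.2 ⟨Nat.find_spec hex, fun _ ↦ Nat.find_min hex⟩⟩

theorem exists_mem_altLayer_of_succ {k : ℕ} {u : V} (hu : u ∈ altLayer G M x (k + 1)) :
    ∃ w ∈ altLayer G M x k, ∃ m, s(w, m) ∈ M ∧ G.Adj m u := by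
  obtain ⟨huW, hnew⟩ := mem_altLayer.1 hu
  obtain ⟨w, hw, m, hwm, hmu⟩ := mem_Wseq_even_succ.1 huW
  refine ⟨w, mem_altLayer.2 ⟨hw, fun j hj hwj ↦ ?_⟩, m, hwm, hmu⟩
  exact hnew (j + 1) (by lia) (mem_Wseq_even_succ.2 ⟨w, hwj, m, hwm, hmu⟩)

/-- `e 0, w 0, e 1, w 1, …, e k, w k` is a walk in `G` whose steps from `w i` to `e (i + 1)` are
edges of `M`. Keeping the even and odd positions in separate sequences mirrors the two sides of a
bipartite graph. -/
structure AltChain (G : SimpleGraph V) (M : Set (Sym2 V)) (e w : ℕ → V) (k : ℕ) : Prop where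
  adj : ∀ i ≤ k, G.Adj (e i) (w i)
  mem : ∀ i < k, s(w i, e (i + 1)) ∈ M

theorem AltChain.snoc {e w : ℕ → V} {k : ℕ} {m u : V} (h : AltChain G M e w k)
    (hm : s(w k, m) ∈ M) (hu : G.Adj m u) :
    AltChain G M (Function.update e (k + 1) m) (Function.update w (k + 1) u) (k + 1) where
  adj i hi := by
    rcases hi.lt_or_eq with hi | rfl
    · simpa [hi.ne] using h.adj i (by lia)
    · simpa using hu
  mem i hi := by
    rcases (Nat.lt_succ_iff.1 hi).lt_or_eq with hi' | rfl
    · simpa [hi.ne, hi'.ne] using h.mem i hi'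
    · simpa using hm

/-- The sequence `e 0, w 0, e 1, w 1, …`, which turns an `AltChain` into the single sequence of
vertices required by `isAugPath`. -/
def interleave (e w : ℕ → V) (n : ℕ) : V := if Even n then e (n / 2) else w (n / 2)

@[simp]
theorem interleave_even (e w : ℕ → V) (i : ℕ) : interleave e w (2 * i) = e i := by
  simp [interleave]

@[simp]
theorem interleave_odd (e w : ℕ → V) (i : ℕ) : interleave e w (2 * i + 1) = w i := by
  simp [interleave, Nat.mul_add_div]

@[simp]
theorem interleave_odd_succ (e w : ℕ → V) (i : ℕ) :
    interleave e w (2 * i + 1 + 1) = e (i + 1) :=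
  interleave_even e w (i + 1)

theorem AltChain.injOn_left {e w : ℕ → V} {k : ℕ} (h : AltChain G M e w k) (hM : isMatching G M)
    (hw : Set.InjOn w (Set.Iic k)) (h0 : ¬ coveredBy M (e 0)) : Set.InjOn e (Set.Iic k) := by
  rintro (_ | i) hi (_ | j) hj hij
  · rfl
  · exact absurd (hij ▸ coveredBy_right (h.mem j hj)) h0
  · exact absurd (hij ▸ coveredBy_right (h.mem i hi)) h0
  · have hwij : w i = w j := hM.left_unique (hij ▸ h.mem i hi) (h.mem j hj)
    rw [hw (Nat.le_of_succ_le hi) (Nat.le_of_succ_le hj) hwij]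

theorem AltChain.notMem {e w : ℕ → V} {k : ℕ} (h : AltChain G M e w k) (hM : isMatching G M)
    (hw : Set.InjOn w (Set.Iic k)) (h0 : ¬ coveredBy M (e 0)) {i : ℕ} (hi : i ≤ k) :
    s(e i, w i) ∉ M := by
  intro hmem
  rcases i with _ | i
  · exact h0 (coveredBy_left hmem)
  · have hwi : w i = w (i + 1) := hM.left_unique (h.mem i hi) (Sym2.eq_swap ▸ hmem)
    exact absurd (hw (Nat.le_of_succ_le hi) hi hwi) (by lia)

theorem AltChain.isAugPath {e w : ℕ → V} {k : ℕ} (h : AltChain G M e w k) (hM : isMatching G M)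
    (hw : Set.InjOn w (Set.Iic k)) (hew : ∀ i ≤ k, ∀ j ≤ k, e i ≠ w j)
    (h0 : ¬ coveredBy M (e 0)) (hk : ¬ coveredBy M (w k)) :
    isAugPath G M (interleave e w) (2 * k + 1) := by
  refine ⟨odd_two_mul_add_one k, fun n hn ↦ ?_, fun n hn n' hn' hnn' ↦ ?_, ?_, ?_, fun n hn ↦ ?_⟩
  · obtain ⟨i, rfl | rfl⟩ := n.even_or_odd'
    · simpa using h.adj i (by lia)
    · simpa using hM.adj (h.mem i (by lia))
  · have he := h.injOn_left hM hw h0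
    obtain ⟨i, rfl | rfl⟩ := n.even_or_odd' <;> obtain ⟨j, rfl | rfl⟩ := n'.even_or_odd' <;>
      simp only [interleave_even, interleave_odd] at hnn'
    · rw [he (show i ≤ k by lia) (show j ≤ k by lia) hnn']
    · exact absurd hnn' (hew i (by lia) j (by lia))
    · exact absurd hnn'.symm (hew j (by lia) i (by lia))
    · rw [hw (show i ≤ k by lia) (show j ≤ k by lia) hnn']
  · exact h0
  · rwa [interleave_odd]
  · obtain ⟨i, rfl | rfl⟩ := n.even_or_odd'
    · simp [h.notMem hM hw h0 (show i ≤ k by lia)]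
    · simpa using h.mem i (by lia)

theorem exists_altChain_of_mem_altLayer (hvx : G.Adj v x) {k : ℕ} {u : V}
    (hu : u ∈ altLayer G M x k) :
    ∃ e w : ℕ → V, AltChain G M e w k ∧ (∀ i ≤ k, w i ∈ altLayer G M x i) ∧ e 0 = v ∧ w k = u := by
  induction k generalizing u with
  | zero =>
    obtain rfl : u = x := (mem_altLayer.1 hu).1
    exact ⟨fun _ ↦ v, fun _ ↦ u, ⟨fun _ _ ↦ hvx, by simp⟩, by simpa using hu, rfl, rfl⟩
  | succ k ih =>
    obtain ⟨t, ht, m, htm, hmu⟩ := exists_mem_altLayer_of_succ hu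
    obtain ⟨e, w, hchain, hlayer, rfl, rfl⟩ := ih ht
    refine ⟨_, _, hchain.snoc htm hmu, fun i hi ↦ ?_, by simp, by simp⟩
    rcases hi.lt_or_eq with hi | rfl
    · simpa [hi.ne] using hlayer i (by lia)
    · simpa using hu

theorem exists_isAugPath_of_mem_altLayer (hAB : G.IsBipartiteWith A B) (hM : isMatching G M)
    (hvA : v ∈ A) (hv : ¬ coveredBy M v) (hvx : G.Adj v x) {k : ℕ} {u : V}
    (hu : u ∈ altLayer G M x k) (hcov : ¬ coveredBy M u) :
    ∃ p, isAugPath G M p (2 * k + 1) := by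
  obtain ⟨e, w, hchain, hlayer, rfl, rfl⟩ := exists_altChain_of_mem_altLayer hvx hu
  have hwB : ∀ i ≤ k, w i ∈ B := fun i hi ↦
    Wseq_even_subset hAB hM (hAB.mem_of_mem_adj hvA hvx) i (mem_altLayer.1 (hlayer i hi)).1
  have heA : ∀ i ≤ k, e i ∈ A := fun i hi ↦ hAB.mem_of_mem_adj' (hwB i hi) (hchain.adj i hi)
  have hw : Set.InjOn w (Set.Iic k) := fun i hi j hj hij ↦
    eq_of_mem_altLayer (hlayer i hi) (hij ▸ hlayer j hj)
  exact ⟨_, hchain.isAugPath hM hw (fun i hi j hj ↦ hAB.disjoint.ne_of_mem (heA i hi) (hwB j hj))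
    hv hcov⟩

theorem coveredBy_of_mem_Wseq (hAB : G.IsBipartiteWith A B) (hM : isMatching G M)
    (hnoaug : ∀ (p : ℕ → V) (l : ℕ), l ≤ K → ¬ isAugPath G M p l)
    (hvA : v ∈ A) (hv : ¬ coveredBy M v) (hvx : G.Adj v x) {k : ℕ} (hk : 2 * k < K) {u : V}
    (hu : u ∈ Wseq G M x (2 * k)) : coveredBy M u := by
  by_contra hcov
  obtain ⟨j, hj, huj⟩ := exists_mem_altLayer hu
  obtain ⟨p, hp⟩ := exists_isAugPath_of_mem_altLayer hAB hM hvA hv hvx huj hcov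
  exact hnoaug p (2 * j + 1) (by lia) hp

theorem exists_mem_Wseq_of_step (hM : isMatching G M) (hv : ¬ coveredBy M v) (hvx : G.Adj v x)
    {u w m : V} (hdeg : (G.neighborSet u).encard ≤ 2) (hu : coveredBy M u)
    (hwm : s(w, m) ∈ M) (hmu : G.Adj m u) {k : ℕ} (huk : u ∈ Wseq G M x (2 * k)) :
    ∃ j ≤ k, w ∈ Wseq G M x (2 * j) := by
  obtain ⟨n, hun⟩ := coveredBy_iff_exists.1 hu
  by_cases hmn : m = n
  · exact ⟨k, le_rfl, hM.left_unique hun (hmn ▸ hwm) ▸ huk⟩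
  have eq_m : ∀ a, G.Adj u a → a ≠ n → a = m := fun a ha han ↦
    eq_of_adj_of_encard_neighborSet_le_two hdeg (hM.adj hun) ha hmu.symm han hmn
  induction k with
  | zero =>
    obtain rfl : u = x := huk
    have hvm : v = m := eq_m v hvx.symm fun hvn ↦ hv (hvn ▸ coveredBy_right hun)
    exact absurd (hvm ▸ coveredBy_right hwm) hv
  | succ k ih =>
    obtain ⟨t, ht, c, htc, hcu⟩ := mem_Wseq_even_succ.1 huk
    by_cases hcn : c = n
    · have htu : t = u := hM.left_unique (hcn ▸ htc) hun
      obtain ⟨j, hj, hwj⟩ := ih (htu ▸ ht)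
      exact ⟨j, by lia, hwj⟩
    · have htw : t = w := hM.left_unique (eq_m c hcu.symm hcn ▸ htc) hwm
      exact ⟨k, by lia, htw ▸ ht⟩

theorem exists_mem_Wseq_of_mem_inter (hM : isMatching G M) (hv : ¬ coveredBy M v)
    (hvx : G.Adj v x) {a b : ℕ}
    (hcov : ∀ j ≤ b, ∀ u ∈ Wseq G M y (2 * j), coveredBy M u)
    (hdeg : ∀ j ≤ b, ∀ u ∈ Wseq G M y (2 * j), (G.neighborSet u).encard ≤ 2)
    {u : V} (hux : u ∈ Wseq G M x (2 * a)) (huy : u ∈ Wseq G M y (2 * b)) :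
    ∃ j ≤ a, y ∈ Wseq G M x (2 * j) := by
  induction b generalizing a u with
  | zero =>
    obtain rfl : u = y := huy
    exact ⟨a, le_rfl, hux⟩
  | succ b ih =>
    obtain ⟨w, hw, m, hwm, hmu⟩ := mem_Wseq_even_succ.1 huy
    obtain ⟨i, hi, hwi⟩ := exists_mem_Wseq_of_step hM hv hvx (hdeg _ le_rfl u huy)
      (hcov _ le_rfl u huy) hwm hmu hux
    obtain ⟨j, hj, hyj⟩ := ih (fun j hj ↦ hcov j (by lia)) (fun j hj ↦ hdeg j (by lia)) hwi hw
    exact ⟨j, hj.trans hi, hyj⟩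

theorem disjoint_Wseq_even (hAB : G.IsBipartiteWith A B)
    (hdeg : ∀ u ∈ B, (G.neighborSet u).encard ≤ 2) (hM : isMatching G M)
    (hnoaug : ∀ (p : ℕ → V) (l : ℕ), l ≤ K → ¬ isAugPath G M p l)
    (hvA : v ∈ A) (hv : ¬ coveredBy M v) (hxy : x ≠ y) (hx : G.Adj v x) (hy : G.Adj v y)
    {a b : ℕ} (ha : 2 * a < K) (hb : 2 * b < K) :
    Disjoint (Wseq G M x (2 * a)) (Wseq G M y (2 * b)) := by
  have cov : ∀ {z}, G.Adj v z → ∀ {c}, 2 * c < K → ∀ j ≤ c, ∀ u ∈ Wseq G M z (2 * j),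
      coveredBy M u := fun hz c hc j hj u ↦
    coveredBy_of_mem_Wseq hAB hM hnoaug hvA hv hz (by lia)
  have deg : ∀ {z}, G.Adj v z → ∀ c, ∀ j ≤ c, ∀ u ∈ Wseq G M z (2 * j),
      (G.neighborSet u).encard ≤ 2 := fun hz _ j _ u hu ↦
    hdeg u (Wseq_even_subset hAB hM (hAB.mem_of_mem_adj hvA hz) j hu)
  refine Set.disjoint_left.2 fun u hux huy ↦ hxy ?_
  obtain ⟨i, hi, hyi⟩ := exists_mem_Wseq_of_mem_inter hM hv hx (cov hy hb) (deg hy b) hux huy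
  obtain ⟨j, hj, hxj⟩ := exists_mem_Wseq_of_mem_inter (a := 0) hM hv hy (cov hx (by lia))
    (deg hx i) rfl hyi
  rwa [Nat.le_zero.1 hj] at hxj

theorem disjoint_Wseq_odd_of_even (hM : isMatching G M) {a b : ℕ}
    (h : Disjoint (Wseq G M x (2 * a)) (Wseq G M y (2 * b))) :
    Disjoint (Wseq G M x (2 * a + 1)) (Wseq G M y (2 * b + 1)) := by
  refine Set.disjoint_left.2 fun u hux huy ↦ ?_
  obtain ⟨w, hw, hwu⟩ := mem_Wseq_odd.1 hux
  obtain ⟨w', hw', hwu'⟩ := mem_Wseq_odd.1 huy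
  exact Set.disjoint_left.1 h hw (hM.left_unique hwu hwu' ▸ hw')

theorem stmt5_general (hAB : G.IsBipartiteWith A B)
    (hdeg : ∀ u ∈ B, (G.neighborSet u).encard ≤ 2) (hM : isMatching G M)
    (hnoaug : ∀ (p : ℕ → V) (l : ℕ), l ≤ K → ¬ isAugPath G M p l)
    (hvA : v ∈ A) (hv : ¬ coveredBy M v) (hxy : x ≠ y) (hx : G.Adj v x) (hy : G.Adj v y) :
    Disjoint (⋃ l ∈ Finset.range K, Wseq G M x l) (⋃ l ∈ Finset.range K, Wseq G M y l) := by
  simp only [Set.disjoint_iUnion_left, Set.disjoint_iUnion_right, Finset.mem_range]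
  intro m hm l hl
  have hxB : x ∈ B := hAB.mem_of_mem_adj hvA hx
  have hyB : y ∈ B := hAB.mem_of_mem_adj hvA hy
  have disjoint_even {a b : ℕ} (ha : 2 * a < K) (hb : 2 * b < K) :=
    disjoint_Wseq_even hAB hdeg hM hnoaug hvA hv hxy hx hy ha hb
  obtain ⟨a, rfl | rfl⟩ := l.even_or_odd' <;> obtain ⟨b, rfl | rfl⟩ := m.even_or_odd'
  · exact disjoint_even hl hm
  · exact hAB.disjoint.symm.mono (Wseq_even_subset hAB hM hxB a) (Wseq_odd_subset hAB hM hyB b)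
  · exact hAB.disjoint.mono (Wseq_odd_subset hAB hM hxB a) (Wseq_even_subset hAB hM hyB b)
  · exact disjoint_Wseq_odd_of_even hM (disjoint_even (by lia) (by lia))

end AlternatingSearch

/-- In a finite 2-regular bipartite graph with matching `M` having no augmenting
paths of length ≤ 2K+1 (K ≥ 2 even), if `v` is uncovered and `x ≠ y` are its two neighbors,
then `⋃_{l=0}^{K-1} W_l(x)` and `⋃_{l=0}^{K-1} W_l(y)` are disjoint. -/
theorem stmt5 {V : Type*} [Fintype V] (G : SimpleGraph V) (M : Set (Sym2 V))
    (K : ℕ) (hK2 : 2 ≤ K) (hKeven : Even K)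
    (hbip : isBipartite G)
    (hdeg : ∀ v : V, (G.neighborSet v).ncard = 2)
    (hM : isMatching G M)
    (hnoaug : ∀ (p : ℕ → V) (l : ℕ), l ≤ 2 * K + 1 → ¬ isAugPath G M p l)
    (v x y : V) (hv : ¬ coveredBy M v)
    (hxy : x ≠ y) (hx : G.Adj v x) (hy : G.Adj v y) :
    Disjoint (⋃ l ∈ Finset.range K, Wseq G M x l)
             (⋃ l ∈ Finset.range K, Wseq G M y l) := by
  obtain ⟨A, B, hAB, hvA⟩ := exists_isBipartiteWith_mem hbip v
  exact stmt5_general hAB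
    (fun w _ ↦ (Set.encard_eq_two.2 (Set.ncard_eq_two.1 (hdeg w))).le)
    hM (fun p l hl ↦ hnoaug p l (by lia)) hvA hv hxy hx hy
end

section
/- Let G be a simple graph, M a matching in G, and let (p_i)_{i ∈ I} be a family of M-augmenting paths that are pairwise vertex-disjoint (no vertex lies on two distinct paths of the family). Then M △ ⋃_{i ∈ I} E(p_i) is a matching in G, and every vertex that is covered by M or is an endpoint of some p_i is covered by M △ ⋃_{i ∈ I} E(p_i). -/
/-!
The vertices of an augmenting path `p 0, …, p l` are matched among themselves by its even-indexed
edges, because `l` is odd, and these are the path edges outside `M`. No edge of `M` leaves the path: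
inner vertices are already matched along it and the two ends are uncovered. So flipping replaces
`M` by a perfect matching on the vertices of the paths and leaves it unchanged elsewhere.
-/

section Matching

variable {V : Type*} {G : SimpleGraph V} {M N E : Set (Sym2 V)} {v : V}

theorem coveredBy.mono (h : M ⊆ N) : coveredBy M v → coveredBy N v :=
  fun ⟨e, he, hv⟩ => ⟨e, h he, hv⟩

theorem coveredBy_iUnion_iff {ι : Type*} {N : ι → Set (Sym2 V)} :
    coveredBy (⋃ i, N i) v ↔ ∃ i, coveredBy (N i) v := by
  simp only [coveredBy, Set.mem_iUnion]
  grind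

theorem isMatching_iff :
    isMatching G M ↔ M ⊆ G.edgeSet ∧ ∀ e ∈ M, ∀ f ∈ M, ∀ v, v ∈ e → v ∈ f → e = f := by
  unfold isMatching
  grind

theorem isMatching.eq_of_mem_s9 (hM : isMatching G M) {e f : Sym2 V} (he : e ∈ M) (hf : f ∈ M)
    (hve : v ∈ e) (hvf : v ∈ f) : e = f :=
  (isMatching_iff.1 hM).2 e he f hf v hve hvf

theorem isMatching.subset (hN : isMatching G N) (h : M ⊆ N) : isMatching G M :=
  ⟨h.trans hN.1, fun e he f hf => hN.2 e (h he) f (h hf)⟩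

theorem isMatching.iUnion {ι : Type*} {N : ι → Set (Sym2 V)} (hN : ∀ i, isMatching G (N i))
    (hdisj : Pairwise fun i j => ∀ v, coveredBy (N i) v → ¬ coveredBy (N j) v) :
    isMatching G (⋃ i, N i) := by
  refine isMatching_iff.2 ⟨Set.iUnion_subset fun i => (hN i).1, fun e he f hf v hve hvf => ?_⟩
  obtain ⟨i, hei⟩ := Set.mem_iUnion.1 he
  obtain ⟨j, hfj⟩ := Set.mem_iUnion.1 hf
  obtain rfl : i = j := by
    by_contra hij
    exact hdisj hij v ⟨e, hei, hve⟩ ⟨f, hfj, hvf⟩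
  exact (hN i).eq_of_mem_s9 hei hfj hve hvf

theorem isMatching.union (hM : isMatching G M) (hN : isMatching G N)
    (hdisj : ∀ v, coveredBy M v → ¬ coveredBy N v) : isMatching G (M ∪ N) := by
  refine isMatching_iff.2 ⟨Set.union_subset hM.1 hN.1, ?_⟩
  rintro e (he | he) f (hf | hf) v hve hvf
  · exact hM.eq_of_mem_s9 he hf hve hvf
  · exact absurd ⟨f, hf, hvf⟩ (hdisj v ⟨e, he, hve⟩)
  · exact absurd ⟨e, he, hve⟩ (hdisj v ⟨f, hf, hvf⟩)
  · exact hN.eq_of_mem_s9 he hf hve hvf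

theorem isMatching.symmDiff (hM : isMatching G M) (hEM : isMatching G (E \ M))
    (hdisj : ∀ v, coveredBy (M \ E) v → ¬ coveredBy (E \ M) v) :
    isMatching G (symmDiff M E) :=
  (hM.subset Set.sdiff_subset).union hEM hdisj

theorem coveredBy_symmDiff (hE : coveredBy E v → coveredBy (E \ M) v)
    (hv : coveredBy M v ∨ coveredBy (E \ M) v) : coveredBy (symmDiff M E) v := by
  by_cases hvEM : coveredBy (E \ M) v
  · exact hvEM.mono Set.subset_union_right
  · obtain ⟨e, heM, hve⟩ := hv.resolve_right hvEM
    have hvE : ¬ coveredBy E v := mt hE hvEM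
    exact ⟨e, Or.inl ⟨heM, fun heE => hvE ⟨e, heE, hve⟩⟩, hve⟩

end Matching

section Path

variable {V : Type*} {G : SimpleGraph V} {M : Set (Sym2 V)} {p : ℕ → V} {l : ℕ} {v : V}

/-- The edges of the path `p 0, …, p l` at even positions, that is `s(p 0, p 1)`, `s(p 2, p 3)`, ….
For an augmenting path these are the edges that flipping adds to the matching. -/
def evenEdges (p : ℕ → V) (l : ℕ) : Set (Sym2 V) :=
  {e | ∃ i < l, Even i ∧ e = s(p i, p (i + 1))}

theorem isMatching_evenEdges (hadj : ∀ i < l, G.Adj (p i) (p (i + 1)))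
    (hinj : ∀ i ≤ l, ∀ j ≤ l, p i = p j → i = j) : isMatching G (evenEdges p l) := by
  refine isMatching_iff.2 ⟨?_, ?_⟩
  · rintro _ ⟨i, hi, -, rfl⟩
    exact hadj i hi
  · rintro _ ⟨i, hi, hi_even, rfl⟩ _ ⟨j, hj, hj_even, rfl⟩ v hvi hvj
    suffices i = j by rw [this]
    rcases Sym2.mem_iff.1 hvi with rfl | rfl <;> rcases Sym2.mem_iff.1 hvj with h | h
    · exact hinj i hi.le j hj.le h
    · have := hinj i hi.le (j + 1) hj h
      grind
    · have := hinj (i + 1) hi j hj.le h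
      grind
    · exact Nat.succ_injective (hinj (i + 1) hi (j + 1) hj h)

theorem evenEdges_subset_pathEdges : evenEdges p l ⊆ pathEdges p l :=
  fun _ ⟨i, hi, _, he⟩ => ⟨i, hi, he⟩

theorem exists_eq_of_coveredBy_pathEdges (hv : coveredBy (pathEdges p l) v) :
    ∃ a ≤ l, p a = v := by
  obtain ⟨_, ⟨i, hi, rfl⟩, hv⟩ := hv
  rcases Sym2.mem_iff.1 hv with rfl | rfl
  exacts [⟨i, hi.le, rfl⟩, ⟨i + 1, hi, rfl⟩]

theorem coveredBy_evenEdges_of_le (hl : Odd l) {a : ℕ} (ha : a ≤ l) :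
    coveredBy (evenEdges p l) (p a) := by
  rcases Nat.even_or_odd a with ha_even | ⟨k, rfl⟩
  · have ha_lt : a < l := by grind
    exact ⟨_, ⟨a, ha_lt, ha_even, rfl⟩, Sym2.mem_mk_left _ _⟩
  · exact ⟨_, ⟨2 * k, ha, even_two_mul k, rfl⟩, Sym2.mem_mk_right _ _⟩

theorem isAugPath.pathEdges_sdiff (h : isAugPath G M p l) : pathEdges p l \ M = evenEdges p l := by
  obtain ⟨-, -, -, -, -, halt⟩ := h
  ext e
  constructor
  · rintro ⟨⟨i, hi, rfl⟩, heM⟩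
    exact ⟨i, hi, Nat.not_odd_iff_even.1 (mt (halt i hi).2 heM), rfl⟩
  · rintro ⟨i, hi, hi_even, rfl⟩
    exact ⟨⟨i, hi, rfl⟩, mt (halt i hi).1 (Nat.not_odd_iff_even.2 hi_even)⟩

theorem isAugPath.mem_pathEdges_of_mem (h : isAugPath G M p l) (hM : isMatching G M) {a : ℕ}
    (ha : a ≤ l) {e : Sym2 V} (he : e ∈ M) (hae : p a ∈ e) : e ∈ pathEdges p l := by
  obtain ⟨-, -, -, h_start, h_end, halt⟩ := h
  have ha_ne_zero : a ≠ 0 := by rintro rfl; exact h_start ⟨e, he, hae⟩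
  have ha_ne_len : a ≠ l := by rintro rfl; exact h_end ⟨e, he, hae⟩
  obtain ⟨b, hb, hb_odd, hab⟩ : ∃ b < l, Odd b ∧ (a = b ∨ a = b + 1) := by
    rcases Nat.even_or_odd a with ha_even | ha_odd
    · exact ⟨a - 1, by grind⟩
    · exact ⟨a, by grind⟩
  refine ⟨b, hb, hM.eq_of_mem_s9 he ((halt b hb).2 hb_odd) hae ?_⟩
  rcases hab with rfl | rfl
  exacts [Sym2.mem_mk_left _ _, Sym2.mem_mk_right _ _]

end Path

section Family

variable {V I : Type*} {G : SimpleGraph V} {M : Set (Sym2 V)} {p : I → ℕ → V} {len : I → ℕ} {v : V}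

theorem exists_eq_of_coveredBy_iUnion_pathEdges
    (hv : coveredBy (⋃ i, pathEdges (p i) (len i)) v) : ∃ i, ∃ a ≤ len i, p i a = v :=
  (coveredBy_iUnion_iff.1 hv).imp fun _ => exists_eq_of_coveredBy_pathEdges

theorem coveredBy_iUnion_evenEdges_of_le {i : I} (hl : Odd (len i)) {a : ℕ} (ha : a ≤ len i) :
    coveredBy (⋃ i, evenEdges (p i) (len i)) (p i a) :=
  coveredBy_iUnion_iff.2 ⟨i, coveredBy_evenEdges_of_le hl ha⟩

theorem isMatching_iUnion_evenEdges (hmatch : ∀ i, isMatching G (evenEdges (p i) (len i)))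
    (hdisj : ∀ i j, i ≠ j → ∀ a ≤ len i, ∀ b ≤ len j, p i a ≠ p j b) :
    isMatching G (⋃ i, evenEdges (p i) (len i)) := by
  refine .iUnion hmatch fun i j hij v hvi hvj => ?_
  obtain ⟨a, ha, rfl⟩ := exists_eq_of_coveredBy_pathEdges (hvi.mono evenEdges_subset_pathEdges)
  obtain ⟨b, hb, hab⟩ := exists_eq_of_coveredBy_pathEdges (hvj.mono evenEdges_subset_pathEdges)
  exact hdisj i j hij a ha b hb hab.symm

theorem iUnion_pathEdges_sdiff (haug : ∀ i, isAugPath G M (p i) (len i)) :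
    (⋃ i, pathEdges (p i) (len i)) \ M = ⋃ i, evenEdges (p i) (len i) :=
  (Set.iUnion_sdiff _ _).trans (Set.iUnion_congr fun i => (haug i).pathEdges_sdiff)

theorem not_coveredBy_sdiff_iUnion_pathEdges (haug : ∀ i, isAugPath G M (p i) (len i))
    (hM : isMatching G M) {i : I} {a : ℕ} (ha : a ≤ len i) :
    ¬ coveredBy (M \ ⋃ i, pathEdges (p i) (len i)) (p i a) :=
  fun ⟨_, ⟨heM, heE⟩, hae⟩ =>
    heE (Set.mem_iUnion_of_mem i ((haug i).mem_pathEdges_of_mem hM ha heM hae))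

end Family

/-- Flipping a family of pairwise vertex-disjoint augmenting paths for a matching
`M` yields a matching covering every vertex covered by `M` and every endpoint of a path. -/
theorem stmt9 {V : Type*} {I : Type*} (G : SimpleGraph V) (M : Set (Sym2 V))
    (hM : isMatching G M) (p : I → ℕ → V) (len : I → ℕ)
    (haug : ∀ i : I, isAugPath G M (p i) (len i))
    (hdisj : ∀ i j : I, i ≠ j → ∀ a ≤ len i, ∀ b ≤ len j, p i a ≠ p j b) :
    isMatching G (symmDiff M (⋃ i : I, pathEdges (p i) (len i))) ∧
    ∀ v : V, (coveredBy M v ∨ ∃ i : I, v = p i 0 ∨ v = p i (len i)) →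
      coveredBy (symmDiff M (⋃ i : I, pathEdges (p i) (len i))) v := by
  set E := ⋃ i, pathEdges (p i) (len i)
  have hEM : E \ M = ⋃ i, evenEdges (p i) (len i) := iUnion_pathEdges_sdiff haug
  have hEM_matching : isMatching G (E \ M) :=
    hEM ▸ isMatching_iUnion_evenEdges
      (fun i => isMatching_evenEdges (haug i).2.1 (haug i).2.2.1) hdisj
  have hEM_cov (i : I) (a : ℕ) (ha : a ≤ len i) : coveredBy (E \ M) (p i a) :=
    hEM ▸ coveredBy_iUnion_evenEdges_of_le (haug i).1 ha
  refine ⟨hM.symmDiff hEM_matching fun v hvM hvE => ?_, fun v hv => coveredBy_symmDiff ?_ ?_⟩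
  · obtain ⟨i, a, ha, rfl⟩ :=
      exists_eq_of_coveredBy_iUnion_pathEdges (hvE.mono Set.sdiff_subset)
    exact not_coveredBy_sdiff_iUnion_pathEdges haug hM ha hvM
  · intro hvE
    obtain ⟨i, a, ha, rfl⟩ := exists_eq_of_coveredBy_iUnion_pathEdges hvE
    exact hEM_cov i a ha
  · refine hv.imp_right ?_
    rintro ⟨i, rfl | rfl⟩
    exacts [hEM_cov i 0 (Nat.zero_le _), hEM_cov i (len i) le_rfl]
end
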